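/- Let m ≥ 4 and let e be an integer with 1 ≤ e ≤ ⌊m/2⌋ such that m/gcd(m,e) is odd, and set h = (m − gcd(m,e))/2. Then the dual code C̄_E^⊥ has dimension 2m + 1 over F_2 and minimum nonzero Hamming weight 2^{m−1} − 2^{m−1−h}, with weight distribution: the number of codewords of weight 0 is 1; of weight 2^{m−1} − 2^{m−1−h} is (2^m − 1)·2^{2h}; of weight 2^{m−1} is (2^m − 1)(2^{m+1} − 2^{2h+1} + 2); of weight 2^{m−1} + 2^{m−1−h} is (2^m − 1)·2^{2h}; of weight 2^m is 1; and there are no codewords of any other weight. Moreover, the extended code C̄_E has length 2^m, dimension 2^m − 1 − 2m, and minimum nonzero Hamming weight 4 if gcd(e,m) > 1 and 6 if gcd(e,m) = 1. -/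

import Mathlib

open Polynomial Finset

/-- The polynomial `c₀ + c₁x + ⋯ + c_{n−1}x^{n−1}` associated to a vector. -/
noncomputable def codePoly {n : ℕ} (c : Fin n → ZMod 2) : Polynomial (ZMod 2) :=
  ∑ i : Fin n, Polynomial.C (c i) * Polynomial.X ^ (i : ℕ)

/-- The generator polynomial `g_E(x) = M_α(x) · M_{α^{1+2^e}}(x)`. -/
noncomputable def gE (m e : ℕ) (α : GaloisField 2 m) : Polynomial (ZMod 2) :=
  minpoly (ZMod 2) α * minpoly (ZMod 2) (α ^ (1 + 2 ^ e))

/-- The binary cyclic code `C_E` of length `2^m − 1` with generator polynomial `g_E`. -/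
def CE (m e : ℕ) (α : GaloisField 2 m) : Set (Fin (2 ^ m - 1) → ZMod 2) :=
  {c | gE m e α ∣ codePoly c}

/-- The extended code `C̄_E ⊆ F_2^{2^m}`: the first `2^m − 1` coordinates form a codeword
of `C_E` and all `2^m` coordinates sum to zero. -/
def CEbar (m e : ℕ) (α : GaloisField 2 m) : Set (Fin (2 ^ m) → ZMod 2) :=
  {c | (fun i : Fin (2 ^ m - 1) => c (Fin.castLE (Nat.sub_le _ _) i)) ∈ CE m e α ∧
       ∑ i, c i = 0}

/-- The dual of a set of vectors over a commutative ring, as a submodule. -/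
def dualCode {n : ℕ} {F : Type*} [CommRing F] (C : Set (Fin n → F)) :
    Submodule F (Fin n → F) where
  carrier := {y | ∀ c ∈ C, ∑ i, y i * c i = 0}
  add_mem' := by
    intro a b ha hb c hc
    have h1 := ha c hc
    have h2 := hb c hc
    simp only [Pi.add_apply, add_mul, Finset.sum_add_distrib, h1, h2, add_zero]
  zero_mem' := by intro c hc; simp
  smul_mem' := by
    intro r a ha c hc
    have h1 := ha c hc
    simp only [Pi.smul_apply, smul_eq_mul, mul_assoc, ← Finset.mul_sum, h1, mul_zero]

lemma codePoly_add {n : ℕ} (a b : Fin n → ZMod 2) :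
    codePoly (fun i => a i + b i) = codePoly a + codePoly b := by
  simp [codePoly, Finset.sum_add_distrib, add_mul]

lemma codePoly_smul {n : ℕ} (r : ZMod 2) (a : Fin n → ZMod 2) :
    codePoly (fun i => r * a i) = Polynomial.C r * codePoly a := by
  simp [codePoly, Finset.mul_sum, mul_assoc]

/-- The extended code `C̄_E`, as an `F_2`-submodule of `F_2^{2^m}`. -/
noncomputable def CEbarSub (m e : ℕ) (α : GaloisField 2 m) :
    Submodule (ZMod 2) (Fin (2 ^ m) → ZMod 2) where
  carrier := CEbar m e α
  add_mem' := by
    rintro a b ⟨ha1, ha2⟩ ⟨hb1, hb2⟩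
    refine ⟨?_, ?_⟩
    · show gE m e α ∣
        codePoly (fun i : Fin (2 ^ m - 1) => (a + b) (Fin.castLE (Nat.sub_le _ _) i))
      have h : (fun i : Fin (2 ^ m - 1) => (a + b) (Fin.castLE (Nat.sub_le _ _) i)) =
          (fun i : Fin (2 ^ m - 1) =>
            a (Fin.castLE (Nat.sub_le _ _) i) + b (Fin.castLE (Nat.sub_le _ _) i)) := rfl
      rw [h, codePoly_add]
      exact dvd_add ha1 hb1
    · simp only [Pi.add_apply, Finset.sum_add_distrib, ha2, hb2, add_zero]
  zero_mem' := by
    refine ⟨?_, by simp⟩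
    show gE m e α ∣
      codePoly (fun i : Fin (2 ^ m - 1) => (0 : Fin (2 ^ m) → ZMod 2) (Fin.castLE (Nat.sub_le _ _) i))
    have h : (fun i : Fin (2 ^ m - 1) => (0 : Fin (2 ^ m) → ZMod 2) (Fin.castLE (Nat.sub_le _ _) i)) =
        (fun _ : Fin (2 ^ m - 1) => (0 : ZMod 2)) := rfl
    rw [h]
    simp [codePoly]
  smul_mem' := by
    rintro r a ⟨ha1, ha2⟩
    refine ⟨?_, ?_⟩
    · show gE m e α ∣
        codePoly (fun i : Fin (2 ^ m - 1) => (r • a) (Fin.castLE (Nat.sub_le _ _) i))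
      have h : (fun i : Fin (2 ^ m - 1) => (r • a) (Fin.castLE (Nat.sub_le _ _) i)) =
          (fun i : Fin (2 ^ m - 1) => r * a (Fin.castLE (Nat.sub_le _ _) i)) := rfl
      rw [h, codePoly_smul]
      exact Dvd.dvd.mul_left ha1 _
    · simp only [Pi.smul_apply, smul_eq_mul, ← Finset.mul_sum, ha2, mul_zero]


set_option linter.unusedSectionVars false
set_option linter.style.haveILetI false

section Abstract

/-- The sign character of `F_2`. -/
def sgn (c : ZMod 2) : ℤ := if c = 0 then 1 else -1

lemma sgn_add (a b : ZMod 2) : sgn (a + b) = sgn a * sgn b := by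
  revert a b; decide

lemma sgn_mul_self (a : ZMod 2) : sgn a * sgn a = 1 := by
  revert a; decide

variable {F : Type*} [Field F] [Fintype F] [Algebra (ZMod 2) F]

/-- The canonical additive character. -/
noncomputable def chi (x : F) : ℤ := sgn (Algebra.trace (ZMod 2) F x)

lemma chi_add (x y : F) : chi (x + y) = chi x * chi y := by
  simp [chi, sgn_add]

lemma chi_zero : chi (0 : F) = 1 := by simp [chi, sgn]

lemma charTwoF (F : Type*) [Field F] [Algebra (ZMod 2) F] : CharP F 2 :=
  charP_of_injective_algebraMap (algebraMap (ZMod 2) F).injective 2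

lemma trace_pow_two_pow (e : ℕ) (x : F) :
    Algebra.trace (ZMod 2) F (x ^ 2 ^ e) = Algebra.trace (ZMod 2) F x := by
  haveI := charTwoF F
  induction e generalizing x with
  | zero => simp
  | succ n ih =>
    rw [pow_succ', pow_mul, ih]
    have := Algebra.trace_eq_of_algEquiv (FiniteField.frobeniusAlgEquiv (ZMod 2) F 2) x
    simpa using this

lemma chi_pow_two_pow (e : ℕ) (x : F) : chi (x ^ 2 ^ e) = chi x := by
  simp [chi, trace_pow_two_pow]

/-- orthogonality for an additive `±1` function on a finite group -/
lemma sum_additive {G : Type*} [AddCommGroup G] [Fintype G] (f : G → ℤ)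
    (hf : ∀ x y, f (x + y) = f x * f y) (g : G) (hg : f g ≠ 1) : ∑ x, f x = 0 := by
  have h : ∑ x, f x = f g * ∑ x, f x := by
    rw [Finset.mul_sum]
    rw [← Equiv.sum_comp (Equiv.addLeft g) f]
    simp [hf]
  have : (f g - 1) * ∑ x, f x = 0 := by rw [sub_mul, one_mul, ← h, sub_self]
  rcases mul_eq_zero.1 this with h | h
  · exact absurd (by linarith) hg
  · exact h

lemma exists_chi_ne (b : F) (hb : b ≠ 0) : ∃ x, chi (b * x) ≠ 1 := by
  by_contra hcon
  push Not at hcon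
  refine hb ((traceForm_nondegenerate (ZMod 2) F).1 b fun x => ?_)
  have := hcon x
  unfold chi sgn at this
  rw [Algebra.traceForm_apply]
  by_contra h0
  rw [if_neg h0] at this
  norm_num at this

lemma sum_chi_mul [DecidableEq F] (b : F) :
    ∑ x, chi (b * x) = if b = 0 then (Fintype.card F : ℤ) else 0 := by
  split_ifs with h
  · simp [h, chi_zero]
  · obtain ⟨g, hg⟩ := exists_chi_ne b h
    exact sum_additive (fun x => chi (b * x)) (fun x y => by rw [mul_add, chi_add]) g hg

lemma pow_gcd_fix (x : F) (a b : ℕ) (ha : x ^ 2 ^ a = x) (hb : x ^ 2 ^ b = x) :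
    x ^ 2 ^ (Nat.gcd a b) = x := by
  haveI := charTwoF F
  have h1 : Function.IsPeriodicPt (frobenius F 2) a x := by
    show _ = _; rw [iterate_frobenius, ha]
  have h2 : Function.IsPeriodicPt (frobenius F 2) b x := by
    show _ = _; rw [iterate_frobenius, hb]
  have := h1.gcd h2
  rw [← iterate_frobenius]; exact this

lemma pow_mul_fix (x : F) (a k : ℕ) (ha : x ^ 2 ^ a = x) : x ^ 2 ^ (a * k) = x := by
  induction k with
  | zero => simp
  | succ n ih => rw [Nat.mul_succ, pow_add, pow_mul, ih, ha]

lemma pow_card_fix {m : ℕ} (hc : Fintype.card F = 2 ^ m) (x : F) : x ^ 2 ^ m = x := by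
  rw [← hc]; exact FiniteField.pow_card x

lemma add_pow_two_pow (x y : F) (e : ℕ) : (x + y) ^ 2 ^ e = x ^ 2 ^ e + y ^ 2 ^ e := by
  haveI := charTwoF F
  exact add_pow_char_pow x y 2 e

lemma Q_add (x y : F) (e : ℕ) : (x + y) ^ (1 + 2 ^ e) =
    x ^ (1 + 2 ^ e) + y ^ (1 + 2 ^ e) + (x * y ^ 2 ^ e + x ^ 2 ^ e * y) := by
  simp only [pow_add, pow_one, add_pow_two_pow]; ring

lemma gcd_two_mul_eq {m e : ℕ} (hodd : Odd (m / Nat.gcd m e)) (he : 1 ≤ e) :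
    Nat.gcd (2 * e) m = Nat.gcd m e := by
  have hd : 0 < Nat.gcd m e := Nat.gcd_pos_of_pos_right _ he
  obtain ⟨m', hm'⟩ := Nat.gcd_dvd_left m e
  obtain ⟨e', he'⟩ := Nat.gcd_dvd_right m e
  have hc := Nat.coprime_div_gcd_div_gcd (m := m) (n := e) hd
  set d := Nat.gcd m e with hdd
  have h1 : m / d = m' := by rw [hm']; exact Nat.mul_div_cancel_left _ hd
  have h2 : e / d = e' := by rw [he']; exact Nat.mul_div_cancel_left _ hd
  rw [h1] at hodd hc; rw [h2] at hc
  rw [hm', he', show 2 * (d * e') = d * (2 * e') by ring, Nat.gcd_mul_left]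
  have : Nat.Coprime (2 * e') m' :=
    Nat.Coprime.mul_left (Nat.coprime_two_left.2 hodd) hc.symm
  rw [this]; simp

/-- fixed points of `x ↦ x^(2^(2e))` -/
lemma fix_two_e {m e : ℕ} (hc : Fintype.card F = 2 ^ m) (hodd : Odd (m / Nat.gcd m e))
    (he : 1 ≤ e) (x : F) : x ^ 2 ^ (2 * e) = x ↔ x ^ 2 ^ (Nat.gcd m e) = x := by
  constructor
  · intro h
    rw [← gcd_two_mul_eq hodd he]
    exact pow_gcd_fix x _ _ h (pow_card_fix hc x)
  · intro h
    obtain ⟨k, hk⟩ := Nat.gcd_dvd_right m e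
    have : 2 * e = Nat.gcd m e * (2 * k) := by
      conv_lhs => rw [hk]
      ring
    rw [this]; exact pow_mul_fix x _ _ h

lemma fix_e {m e : ℕ} (x : F) (h : x ^ 2 ^ (Nat.gcd m e) = x) : x ^ 2 ^ e = x := by
  obtain ⟨k, hk⟩ := Nat.gcd_dvd_right m e
  have := pow_mul_fix x _ k h
  rwa [← hk] at this

lemma Q_inj {m e : ℕ} (hc : Fintype.card F = 2 ^ m) (hodd : Odd (m / Nat.gcd m e))
    (he : 1 ≤ e) : Function.Injective (fun x : F => x ^ (1 + 2 ^ e)) := by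
  haveI := charTwoF F
  intro x y hxy
  simp only at hxy
  by_cases hy : y = 0
  · subst hy
    rw [zero_pow (by positivity)] at hxy
    exact pow_eq_zero_iff (by positivity) |>.1 hxy
  have hz : (x / y) ^ (1 + 2 ^ e) = 1 := by
    rw [div_pow, hxy, div_self (pow_ne_zero _ hy)]
  set z := x / y with hzd
  have hz0 : z ≠ 0 := by
    intro h0; rw [h0, zero_pow (by positivity)] at hz; exact zero_ne_one hz
  rw [pow_add, pow_one] at hz
  have hz1 : z ^ 2 ^ e = z⁻¹ := eq_inv_of_mul_eq_one_right hz
  have hz2 : z ^ 2 ^ (2 * e) = z := by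
    rw [two_mul, pow_add, pow_mul, hz1, inv_pow, hz1, inv_inv]
  have hz3 := fix_e z ((fix_two_e hc hodd he z).1 hz2)
  rw [hz3] at hz
  have : z = 1 := by
    have h4 : (z - 1) ^ 2 = 0 := by
      have h2 : (2 : F) = 0 := CharTwo.two_eq_zero
      linear_combination hz + (1 - z) * h2
    exact sub_eq_zero.1 (pow_eq_zero_iff (by norm_num) |>.1 h4)
  rw [hzd] at this
  exact (div_eq_one_iff_eq hy).1 this

lemma Q_surj {m e : ℕ} (hc : Fintype.card F = 2 ^ m) (hodd : Odd (m / Nat.gcd m e))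
    (he : 1 ≤ e) : Function.Surjective (fun x : F => x ^ (1 + 2 ^ e)) :=
  Finite.surjective_of_injective (Q_inj hc hodd he)

/-- Walsh transform. -/
noncomputable def W (e : ℕ) (a b : F) : ℤ := ∑ x : F, chi (a * x ^ (1 + 2 ^ e) + b * x)

lemma W_scale (e : ℕ) (s b : F) (hs : s ≠ 0) : W e (s ^ (1 + 2 ^ e)) b = W e 1 (b / s) := by
  unfold W
  rw [← Equiv.sum_comp (Equiv.mulLeft₀ s hs) (fun x => chi (1 * x ^ (1 + 2 ^ e) + b / s * x))]
  apply Finset.sum_congr rfl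
  intro x _
  simp only [Equiv.mulLeft₀_apply, one_mul, mul_pow]
  congr 2
  field_simp

lemma W_zero [DecidableEq F] (e : ℕ) (b : F) :
    W e 0 b = if b = 0 then (Fintype.card F : ℤ) else 0 := by
  unfold W; simp only [zero_mul, zero_add]; exact sum_chi_mul b

lemma parseval [DecidableEq F] (e : ℕ) (a : F) :
    ∑ b, W e a b ^ 2 = (Fintype.card F : ℤ) ^ 2 := by
  haveI := charTwoF F
  have h : ∀ b, W e a b ^ 2 = ∑ x : F, ∑ y : F,
      chi (a * x ^ (1 + 2 ^ e)) * chi (a * y ^ (1 + 2 ^ e)) * chi ((x + y) * b) := by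
    intro b
    unfold W
    rw [sq, Finset.sum_mul_sum]
    refine Finset.sum_congr rfl fun x _ => Finset.sum_congr rfl fun y _ => ?_
    rw [add_mul, chi_add, chi_add, chi_add, mul_comm b x, mul_comm b y]; ring
  simp_rw [h]
  rw [Finset.sum_comm]
  have h2 : ∀ x : F, ∑ b : F, ∑ y : F,
      chi (a * x ^ (1 + 2 ^ e)) * chi (a * y ^ (1 + 2 ^ e)) * chi ((x + y) * b)
      = Fintype.card F := by
    intro x
    rw [Finset.sum_comm]
    simp_rw [← Finset.mul_sum, sum_chi_mul]
    rw [Finset.sum_eq_single x]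
    · rw [if_pos (CharTwo.add_self_eq_zero x)]
      unfold chi; rw [sgn_mul_self, one_mul]
    · intro y _ hy
      rw [if_neg, mul_zero]
      intro h0; exact hy ((CharTwo.add_eq_zero.1 h0).symm)
    · simp
  rw [Finset.sum_congr rfl (fun x _ => h2 x)]
  simp [sq]

/-- The fixed set of `x ↦ x^(2^d)`. -/
lemma card_fix [DecidableEq F] {m d : ℕ} (hc : Fintype.card F = 2 ^ m) (hd : d ∣ m) (hd0 : 0 < d) :
    (Finset.univ.filter (fun x : F => x ^ 2 ^ d = x)).card = 2 ^ d := by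
  obtain ⟨g, hg⟩ := IsCyclic.exists_ofOrder_eq_natCard (α := Fˣ)
  rw [Nat.card_eq_fintype_card, Fintype.card_units, hc] at hg
  have hdv : 2 ^ d - 1 ∣ 2 ^ m - 1 := Nat.pow_sub_one_dvd_pow_sub_one 2 hd
  have h2d : 2 ≤ 2 ^ d := by
    calc 2 = 2 ^ 1 := rfl
    _ ≤ 2 ^ d := Nat.pow_le_pow_right (by norm_num) hd0
  have hm0 : 0 < 2 ^ m - 1 := by
    rw [← hg]; exact orderOf_pos g
  obtain ⟨k, hk⟩ := hdv
  have hp : IsPrimitiveRoot (g : F) (2 ^ m - 1) := by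
    rw [← hg, ← orderOf_units]; exact IsPrimitiveRoot.orderOf _
  have hp2 : IsPrimitiveRoot ((g : F) ^ k) (2 ^ d - 1) :=
    hp.pow hm0 (by rw [hk, mul_comm])
  have hcard := hp2.card_nthRootsFinset
  have : (Finset.univ.filter (fun x : F => x ^ 2 ^ d = x)) =
      insert 0 (nthRootsFinset (2 ^ d - 1) (1 : F)) := by
    ext x
    simp only [Finset.mem_filter, Finset.mem_univ, true_and, Finset.mem_insert]
    rw [mem_nthRootsFinset (by omega)]
    have e1 : x ^ 2 ^ d = x * x ^ (2 ^ d - 1) := by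
      rw [← pow_succ']; congr 1; omega
    rw [e1]
    by_cases hx : x = 0
    · simp [hx]
    · simp [hx]
  rw [this, Finset.card_insert_of_notMem, hcard]
  · omega
  · rw [mem_nthRootsFinset (by omega), zero_pow (by omega)]; simp

lemma walsh_inner_sum [DecidableEq F] {m e : ℕ} (hc : Fintype.card F = 2 ^ m)
    (hodd : Odd (m / Nat.gcd m e)) (he : 1 ≤ e) (y : F) :
    ∑ x : F, chi (x * y ^ 2 ^ e + x ^ 2 ^ e * y) =
      if y ^ 2 ^ (Nat.gcd m e) = y then 2 ^ m else 0 := by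
  haveI := charTwoF F
  have h : ∀ x : F, chi (x * y ^ 2 ^ e + x ^ 2 ^ e * y) =
      chi ((y ^ 2 ^ (2 * e) + y) * x ^ 2 ^ e) := by
    intro x
    rw [chi_add, ← chi_pow_two_pow e (x * y ^ 2 ^ e), ← chi_add, mul_pow, ← pow_mul, ← pow_add,
      two_mul]
    congr 1; ring
  simp_rw [h]
  have hb : Function.Bijective (fun x : F => x ^ 2 ^ e) := by
    rw [← Finite.injective_iff_bijective]
    intro a b hab
    exact iterateFrobenius_inj F 2 e (by simpa [iterateFrobenius_def] using hab)
  rw [Function.Bijective.sum_comp hb (fun z => chi ((y ^ 2 ^ (2 * e) + y) * z)), sum_chi_mul]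
  have hiff : y ^ 2 ^ (2 * e) + y = 0 ↔ y ^ 2 ^ (Nat.gcd m e) = y := by
    rw [CharTwo.add_eq_zero, fix_two_e hc hodd he]
  simp only [hiff, hc]
  push_cast; rfl

lemma W_one_sq [DecidableEq F] {m e : ℕ} (hc : Fintype.card F = 2 ^ m)
    (hodd : Odd (m / Nat.gcd m e)) (he : 1 ≤ e) (b : F) :
    W e 1 b ^ 2 = 0 ∨ W e 1 b ^ 2 = 2 ^ m * 2 ^ (Nat.gcd m e) := by
  haveI := charTwoF F
  set d := Nat.gcd m e with hdd
  have hd0 : 0 < d := Nat.gcd_pos_of_pos_right _ he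
  have h1 : W e 1 b ^ 2 = ∑ y : F, chi (y ^ (1 + 2 ^ e) + b * y) *
      (if y ^ 2 ^ d = y then 2 ^ m else 0) := by
    have hin : ∀ y : F, (if y ^ 2 ^ d = y then (2 : ℤ) ^ m else 0) =
        ∑ x : F, chi (x * y ^ 2 ^ e + x ^ 2 ^ e * y) :=
      fun y => (walsh_inner_sum (m := m) (e := e) hc hodd he y).symm
    simp_rw [hin]
    unfold W
    rw [sq, Finset.sum_mul_sum]
    simp_rw [Finset.mul_sum]
    rw [Finset.sum_comm (γ := F) (f := fun y x => chi (y ^ (1 + 2 ^ e) + b * y) * _)]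
    refine Finset.sum_congr rfl fun x _ => ?_
    rw [← Equiv.sum_comp (Equiv.addLeft x)]
    refine Finset.sum_congr rfl fun y _ => ?_
    simp only [Equiv.coe_addLeft]
    rw [← chi_add, ← chi_add]
    congr 1
    rw [Q_add]
    have := CharTwo.add_self_eq_zero (x ^ (1 + 2 ^ e))
    have h' := CharTwo.add_self_eq_zero (b * x)
    linear_combination this + h'
  have h2 : W e 1 b ^ 2 = 2 ^ m * ∑ y ∈ Finset.univ.filter (fun y : F => y ^ 2 ^ d = y),
      chi ((1 + b) * y) := by
    rw [h1, Finset.mul_sum, Finset.sum_filter]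
    refine Finset.sum_congr rfl fun y _ => ?_
    split_ifs with hy
    · have : y ^ (1 + 2 ^ e) = y ^ 2 ^ 1 := by
        rw [pow_add, fix_e y hy]; ring
      rw [this, chi_add, chi_pow_two_pow, ← chi_add, mul_comm]
      congr 2; ring
    · simp
  by_cases hall : ∀ y : F, y ^ 2 ^ d = y → chi ((1 + b) * y) = 1
  · right
    rw [h2]
    rw [Finset.sum_congr rfl (g := fun _ => (1 : ℤ))
      (fun y hy => hall y (by simpa using hy))]
    rw [Finset.sum_const, card_fix hc (Nat.gcd_dvd_left m e) hd0]
    simp [hdd]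
  · left
    push Not at hall
    obtain ⟨g, hg, hg1⟩ := hall
    let S : AddSubgroup F :=
      { carrier := {y | y ^ 2 ^ d = y}
        add_mem' := by
          intro u v hu hv
          simp only [Set.mem_ofPred_eq] at *
          rw [add_pow_two_pow, hu, hv]
        zero_mem' := by simp
        neg_mem' := by
          intro u hu
          simpa [CharTwo.neg_eq] using hu }
    classical
    haveI : Fintype S := Fintype.ofFinite S
    have := sum_additive (G := S) (fun y => chi ((1 + b) * (y : F)))
      (fun x y => by simp [mul_add, chi_add]) ⟨g, hg⟩ hg1
    rw [h2]
    rw [Finset.sum_subtype (p := fun y : F => y ∈ S) _ (by intro x; simp [S])]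
    rw [this, mul_zero]

lemma W_values [DecidableEq F] {m e h : ℕ} (hc : Fintype.card F = 2 ^ m)
    (hodd : Odd (m / Nat.gcd m e)) (he : 1 ≤ e) (hh : 2 * h + Nat.gcd m e = m) (a b : F)
    (ha : a ≠ 0) :
    W e a b = 0 ∨ W e a b = 2 ^ (m - h) ∨ W e a b = - 2 ^ (m - h) := by
  obtain ⟨s, rfl⟩ := Q_surj hc hodd he a
  have hs : s ≠ 0 := by
    rintro rfl; apply ha; simp
  simp only
  rw [W_scale e s b hs]
  rcases W_one_sq hc hodd he (b / s) with h0 | h0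
  · left; exact pow_eq_zero_iff (by norm_num) |>.1 h0
  · right
    apply sq_eq_sq_iff_eq_or_eq_neg.1
    rw [h0, ← pow_add, ← pow_mul]; congr 1; omega

lemma W_count [DecidableEq F] {m e h : ℕ} (hc : Fintype.card F = 2 ^ m)
    (hodd : Odd (m / Nat.gcd m e)) (he : 1 ≤ e) (hh : 2 * h + Nat.gcd m e = m) (a : F)
    (ha : a ≠ 0) :
    (Finset.univ.filter (fun b : F => W e a b ≠ 0)).card = 2 ^ (2 * h) := by
  have hp := parseval (F := F) e a
  have h1 : ∀ b : F, W e a b ^ 2 = if W e a b ≠ 0 then 2 ^ (2 * (m - h)) else 0 := by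
    intro b
    rcases W_values hc hodd he hh a b ha with h0 | h0 | h0 <;> simp [h0, ← pow_mul, mul_comm]
  simp_rw [h1] at hp
  rw [← Finset.sum_filter, Finset.sum_const, hc] at hp
  simp only [nsmul_eq_mul] at hp
  have h2 : ((2 : ℤ) ^ m) ^ 2 = 2 ^ (2 * h) * 2 ^ (2 * (m - h)) := by
    rw [← pow_mul, ← pow_add]; congr 1; omega
  push_cast at hp
  rw [h2] at hp
  have := mul_right_cancel₀ (by positivity) hp
  exact_mod_cast this

end Abstract

section Coding

variable {F : Type*} [Field F] [Fintype F] [Algebra (ZMod 2) F]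

/-- Parity check map. -/
noncomputable def evMap (e : ℕ) {N : ℕ} (ι : Fin N ≃ F) :
    (Fin N → ZMod 2) →ₗ[ZMod 2] F × F × ZMod 2 where
  toFun c := (∑ i, c i • ι i, ∑ i, c i • (ι i) ^ (1 + 2 ^ e), ∑ i, c i)
  map_add' a b := by
    simp [add_smul, Finset.sum_add_distrib]
  map_smul' r a := by
    simp [mul_smul, Finset.smul_sum, Finset.mul_sum]

/-- The words `Tr(aQ(x)+bx)+c`. -/
noncomputable def Phi (e : ℕ) {N : ℕ} (ι : Fin N ≃ F) :
    (F × F × ZMod 2) →ₗ[ZMod 2] (Fin N → ZMod 2) where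
  toFun p := fun i => Algebra.trace (ZMod 2) F (p.1 * (ι i) ^ (1 + 2 ^ e) + p.2.1 * ι i) + p.2.2
  map_add' a b := by
    funext i
    simp only [Prod.fst_add, Prod.snd_add, add_mul, map_add, Pi.add_apply]; ring
  map_smul' r a := by
    funext i
    simp only [Prod.smul_fst, Prod.smul_snd, smul_mul_assoc, map_add, map_smul, Pi.smul_apply,
      RingHom.id_apply, smul_eq_mul, mul_add]

lemma Phi_mem_dual (e : ℕ) {N : ℕ} (ι : Fin N ≃ F) (p : F × F × ZMod 2) :
    Phi e ι p ∈ dualCode ((LinearMap.ker (evMap e ι) : Submodule _ _) : Set (Fin N → ZMod 2)) := by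
  intro c hc
  have hc' : evMap e ι c = 0 := hc
  simp only [evMap, LinearMap.coe_mk, AddHom.coe_mk, Prod.mk_eq_zero] at hc'
  obtain ⟨h1, h2, h3⟩ := hc'
  have h4 : ∀ i, Phi e ι p i * c i =
      Algebra.trace (ZMod 2) F (p.1 * (c i • (ι i) ^ (1 + 2 ^ e)))
      + Algebra.trace (ZMod 2) F (p.2.1 * (c i • ι i)) + p.2.2 * c i := by
    intro i
    simp only [Phi, LinearMap.coe_mk, AddHom.coe_mk, mul_smul_comm, map_smul, map_add, smul_eq_mul]
    ring
  simp_rw [h4]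
  rw [Finset.sum_add_distrib, Finset.sum_add_distrib, ← map_sum, ← map_sum, ← Finset.mul_sum,
    ← Finset.mul_sum, ← Finset.mul_sum, h1, h2, h3]
  simp

lemma hamming_sgn {N : ℕ} (y : Fin N → ZMod 2) :
    ∑ i, sgn (y i) = (N : ℤ) - 2 * (hammingNorm y : ℤ) := by
  have : ∀ i, sgn (y i) = 1 - 2 * (if y i ≠ 0 then 1 else 0) := by
    intro i; unfold sgn; by_cases h : y i = 0 <;> simp [h]
  simp_rw [this]
  rw [Finset.sum_sub_distrib, ← Finset.mul_sum, Finset.sum_boole]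
  simp [hammingNorm]

lemma Phi_weight (e : ℕ) {N : ℕ} (ι : Fin N ≃ F) (p : F × F × ZMod 2) :
    (N : ℤ) - 2 * (hammingNorm (Phi e ι p) : ℤ) = sgn p.2.2 * W e p.1 p.2.1 := by
  rw [← hamming_sgn]
  unfold W
  rw [← Equiv.sum_comp ι, Finset.mul_sum]
  refine Finset.sum_congr rfl fun i _ => ?_
  simp only [Phi, LinearMap.coe_mk, AddHom.coe_mk, sgn_add, chi]
  ring

lemma sgn_inj : ∀ c c' : ZMod 2, sgn c = sgn c' → c = c' := by
  decide

lemma sgn_cases (c : ZMod 2) : (c = 0 ∧ sgn c = 1) ∨ (c = 1 ∧ sgn c = -1) := by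
  revert c; decide


/-- value classification -/
lemma SW_values [DecidableEq F] {m e h : ℕ} (hc : Fintype.card F = 2 ^ m)
    (hodd : Odd (m / Nat.gcd m e)) (he : 1 ≤ e) (hh : 2 * h + Nat.gcd m e = m) (h1 : 1 ≤ h)
    (p : F × F × ZMod 2) :
    sgn p.2.2 * W e p.1 p.2.1 = 0 ∨ sgn p.2.2 * W e p.1 p.2.1 = 2 ^ (m - h) ∨
    sgn p.2.2 * W e p.1 p.2.1 = - 2 ^ (m - h) ∨ (p = (0, 0, 0)) ∨ p = (0, 0, 1) := by
  obtain ⟨a, b, c⟩ := p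
  simp only
  by_cases ha : a = 0
  · subst ha
    by_cases hb : b = 0
    · subst hb
      rcases sgn_cases c with ⟨rfl, _⟩ | ⟨rfl, _⟩ <;> simp
    · left; rw [W_zero, if_neg hb, mul_zero]
  · rcases W_values hc hodd he hh a b ha with h0 | h0 | h0 <;>
    rcases sgn_cases c with ⟨_, hs⟩ | ⟨_, hs⟩ <;> simp [h0, hs]

lemma W00 [DecidableEq F] {m e h : ℕ} (hc : Fintype.card F = 2 ^ m)
    (hodd : Odd (m / Nat.gcd m e)) (he : 1 ≤ e) (hh : 2 * h + Nat.gcd m e = m) (h1 : 1 ≤ h)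
    : W e (0 : F) 0 = 2 ^ m := by
  rw [W_zero, if_pos rfl, hc]; push_cast; rfl

lemma two_pow_facts [DecidableEq F] {m e h : ℕ} (hc : Fintype.card F = 2 ^ m)
    (hodd : Odd (m / Nat.gcd m e)) (he : 1 ≤ e) (hh : 2 * h + Nat.gcd m e = m) (h1 : 1 ≤ h)
    : (0 : ℤ) < 2 ^ (m - h) ∧ (2 : ℤ) ^ (m - h) < 2 ^ m := by
  constructor
  · positivity
  · exact pow_lt_pow_right₀ (by norm_num) (by omega)

lemma SW_pow_iff [DecidableEq F] {m e h : ℕ} (hc : Fintype.card F = 2 ^ m)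
    (hodd : Odd (m / Nat.gcd m e)) (he : 1 ≤ e) (hh : 2 * h + Nat.gcd m e = m) (h1 : 1 ≤ h)
    (p : F × F × ZMod 2) : sgn p.2.2 * W e p.1 p.2.1 = 2 ^ m ↔ p = (0, 0, 0) := by
  have hf := two_pow_facts hc hodd he hh h1
  have hW := W00 hc hodd he hh h1
  constructor
  · intro hp
    rcases SW_values hc hodd he hh h1 p with h0 | h0 | h0 | h0 | h0
    · rw [h0] at hp; linarith
    · rw [h0] at hp; linarith
    · rw [h0] at hp; linarith
    · exact h0
    · rw [h0] at hp; simp only [hW, show sgn 1 = -1 by decide] at hp; linarith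
  · rintro rfl; simp [hW, sgn]

lemma SW_neg_pow_iff [DecidableEq F] {m e h : ℕ} (hc : Fintype.card F = 2 ^ m)
    (hodd : Odd (m / Nat.gcd m e)) (he : 1 ≤ e) (hh : 2 * h + Nat.gcd m e = m) (h1 : 1 ≤ h)
    (p : F × F × ZMod 2) :
    sgn p.2.2 * W e p.1 p.2.1 = - 2 ^ m ↔ p = (0, 0, 1) := by
  have hf := two_pow_facts hc hodd he hh h1
  have hW := W00 hc hodd he hh h1
  constructor
  · intro hp
    rcases SW_values hc hodd he hh h1 p with h0 | h0 | h0 | h0 | h0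
    · rw [h0] at hp; linarith
    · rw [h0] at hp; linarith
    · rw [h0] at hp; linarith
    · rw [h0] at hp; simp only [hW, show sgn 0 = 1 by decide] at hp; linarith
    · exact h0
  · rintro rfl; simp [hW, sgn]

lemma pairs_card [DecidableEq F] {m e h : ℕ} (hc : Fintype.card F = 2 ^ m)
    (hodd : Odd (m / Nat.gcd m e)) (he : 1 ≤ e) (hh : 2 * h + Nat.gcd m e = m) (h1 : 1 ≤ h)
    :
    (Finset.univ.filter (fun q : F × F => q.1 ≠ 0 ∧ W e q.1 q.2 ≠ 0)).card
      = (2 ^ m - 1) * 2 ^ (2 * h) := by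
  have : (Finset.univ.filter (fun q : F × F => q.1 ≠ 0 ∧ W e q.1 q.2 ≠ 0)) =
      Finset.map (Equiv.sigmaEquivProd F F).toEmbedding
        ((Finset.univ.filter (fun a : F => a ≠ 0)).sigma
          (fun a => Finset.univ.filter (fun b : F => W e a b ≠ 0))) := by
    ext ⟨a, b⟩
    simp
  rw [this, Finset.card_map, Finset.card_sigma]
  rw [Finset.sum_congr rfl (fun a ha =>
    W_count hc hodd he hh a (by simpa using ha))]
  rw [Finset.sum_const, smul_eq_mul, Finset.filter_ne', Finset.card_erase_of_mem (by simp),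
    Finset.card_univ, hc]

lemma SW_count [DecidableEq F] {m e h : ℕ} (hc : Fintype.card F = 2 ^ m)
    (hodd : Odd (m / Nat.gcd m e)) (he : 1 ≤ e) (hh : 2 * h + Nat.gcd m e = m) (h1 : 1 ≤ h)
    (s : ℤ) (hs : s = 1 ∨ s = -1) :
    (Finset.univ.filter (fun p : F × F × ZMod 2 =>
      sgn p.2.2 * W e p.1 p.2.1 = s * 2 ^ (m - h))).card = (2 ^ m - 1) * 2 ^ (2 * h) := by
  have hf := two_pow_facts hc hodd he hh h1
  have hW := W00 hc hodd he hh h1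
  rw [← pairs_card hc hodd he hh h1]
  apply Finset.card_bij (fun p _ => (p.1, p.2.1))
  · rintro ⟨a, b, c⟩ hp
    simp only [Finset.mem_filter, Finset.mem_univ, true_and] at hp ⊢
    have hne : W e a b ≠ 0 := by
      intro h0; rw [h0, mul_zero] at hp
      rcases hs with rfl | rfl <;> linarith
    refine ⟨?_, hne⟩
    rintro rfl
    rw [W_zero] at hp hne
    have hb : b = 0 := by by_contra hb; simp [hb] at hne
    rw [if_pos hb, hc] at hp
    push_cast at hp
    rcases hs with rfl | rfl <;> rcases sgn_cases c with ⟨_, h2⟩ | ⟨_, h2⟩ <;> rw [h2] at hp <;>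
      linarith
  · rintro ⟨a, b, c⟩ hp ⟨a', b', c'⟩ hp' heq
    simp only [Prod.mk.injEq] at heq
    obtain ⟨rfl, rfl⟩ := heq
    simp only [Finset.mem_filter, Finset.mem_univ, true_and] at hp hp'
    have hne : W e a b ≠ 0 := by
      intro h0; rw [h0, mul_zero] at hp
      rcases hs with rfl | rfl <;> linarith
    have : sgn c = sgn c' := mul_right_cancel₀ hne (hp.trans hp'.symm)
    have : c = c' := sgn_inj _ _ this
    rw [this]
  · rintro ⟨a, b⟩ hq
    simp only [Finset.mem_filter, Finset.mem_univ, true_and] at hq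
    rcases W_values hc hodd he hh a b hq.1 with h0 | h0 | h0
    · exact absurd h0 hq.2
    · rcases hs with rfl | rfl
      · exact ⟨(a, b, 0), by simp [h0, sgn], rfl⟩
      · exact ⟨(a, b, 1), by simp [h0, sgn], rfl⟩
    · rcases hs with rfl | rfl
      · exact ⟨(a, b, 1), by simp [h0, sgn], rfl⟩
      · exact ⟨(a, b, 0), by simp [h0, sgn], rfl⟩

lemma SW_count_zero [DecidableEq F] {m e h : ℕ} (hc : Fintype.card F = 2 ^ m)
    (hodd : Odd (m / Nat.gcd m e)) (he : 1 ≤ e) (hh : 2 * h + Nat.gcd m e = m) (h1 : 1 ≤ h)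
    :
    (Finset.univ.filter (fun p : F × F × ZMod 2 =>
      sgn p.2.2 * W e p.1 p.2.1 = 0)).card =
      (2 ^ m - 1) * (2 ^ (m + 1) - 2 ^ (2 * h + 1) + 2) := by
  have hf := two_pow_facts hc hodd he hh h1
  have hW := W00 hc hodd he hh h1
  have hp := SW_count hc hodd he hh h1 1 (Or.inl rfl)
  have hn := SW_count hc hodd he hh h1 (-1) (Or.inr rfl)
  set T : F × F × ZMod 2 → ℤ := fun p => sgn p.2.2 * W e p.1 p.2.1 with hT
  have hmaps : ∀ p ∈ (Finset.univ : Finset (F × F × ZMod 2)), T p ∈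
      ({0, 1 * 2 ^ (m - h), (-1) * 2 ^ (m - h), 2 ^ m, - 2 ^ m} : Finset ℤ) := by
    intro p _
    simp only [Finset.mem_insert, Finset.mem_singleton]
    rcases SW_values hc hodd he hh h1 p with h0 | h0 | h0 | h0 | h0
    · left; exact h0
    · right; left; rw [one_mul]; exact h0
    · right; right; left; rw [neg_one_mul]; exact h0
    · right; right; right; left; exact (SW_pow_iff hc hodd he hh h1 p).2 h0
    · right; right; right; right; exact (SW_neg_pow_iff hc hodd he hh h1 p).2 h0
  have hsum := Finset.card_eq_sum_card_fiberwise hmaps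
  have h4 : (Finset.univ.filter (fun p => T p = 2 ^ m)).card = 1 := by
    rw [Finset.card_eq_one]
    exact ⟨(0, 0, 0), by ext p; simp [hT, SW_pow_iff hc hodd he hh h1 p]⟩
  have h5 : (Finset.univ.filter (fun p => T p = - 2 ^ m)).card = 1 := by
    rw [Finset.card_eq_one]
    exact ⟨(0, 0, 1), by ext p; simp [hT, SW_neg_pow_iff hc hodd he hh h1 p]⟩
  rw [Finset.sum_insert, Finset.sum_insert, Finset.sum_insert, Finset.sum_insert,
    Finset.sum_singleton, h4, h5, hp, hn] at hsum
  · have hcard : (Finset.univ : Finset (F × F × ZMod 2)).card = 2 ^ m * (2 ^ m * 2) := by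
      simp [hc]
    rw [hcard] at hsum
    have e1 : 2 ^ (2 * h + 1) ≤ 2 ^ (m + 1) := Nat.pow_le_pow_right (by norm_num) (by omega)
    have e2 : 1 ≤ 2 ^ m := Nat.one_le_two_pow
    obtain ⟨M, hM⟩ : ∃ M, 2 ^ m = M + 1 := ⟨2 ^ m - 1, by omega⟩
    obtain ⟨D, hD⟩ := Nat.exists_eq_add_of_le e1
    rw [hD, Nat.add_sub_cancel_left]
    rw [hM] at hsum ⊢
    simp only [Nat.add_sub_cancel] at hsum ⊢
    rw [pow_succ, pow_succ 2 (2 * h), hM] at hD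
    generalize 2 ^ (2 * h) = H at *
    zify at *
    linear_combination (-1 : ℤ) * hsum + M * hD
  all_goals
    simp only [Finset.mem_insert, Finset.mem_singleton, not_or]
  · intro h; linarith
  · exact ⟨by intro h; linarith, by intro h; linarith⟩
  · exact ⟨by intro h; linarith, by intro h; linarith, by intro h; linarith⟩
  · exact ⟨by intro h; linarith, by intro h; linarith, by intro h; linarith, by intro h; linarith⟩

lemma Phi_inj [DecidableEq F] {m e h : ℕ} (hc : Fintype.card F = 2 ^ m)
    (hodd : Odd (m / Nat.gcd m e)) (he : 1 ≤ e) (hh : 2 * h + Nat.gcd m e = m) (h1 : 1 ≤ h)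
    (ι : Fin (2 ^ m) ≃ F) : Function.Injective (Phi e ι) := by
  rw [injective_iff_map_eq_zero]
  intro p hp
  have hw := Phi_weight e ι p
  rw [hp] at hw
  simp only [hammingNorm_zero] at hw
  push_cast at hw
  have := (SW_pow_iff hc hodd he hh h1 p).1 (by linarith)
  rw [this]; rfl

lemma finrank_F {m : ℕ} (hc : Fintype.card F = 2 ^ m) : Module.finrank (ZMod 2) F = m := by
  have := Module.card_eq_pow_finrank (K := ZMod 2) (V := F)
  rw [hc, ZMod.card] at this
  exact (Nat.pow_right_injective (le_refl 2) this).symm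

lemma finrank_dual {N : ℕ} (K : Submodule (ZMod 2) (Fin N → ZMod 2)) :
    Module.finrank (ZMod 2) (dualCode (K : Set (Fin N → ZMod 2))) + Module.finrank (ZMod 2) K
      = N := by
  set B := Matrix.toBilin' (1 : Matrix (Fin N) (Fin N) (ZMod 2)) with hB
  have hnd : B.Nondegenerate :=
    LinearMap.BilinForm.nondegenerate_toBilin'_of_det_ne_zero' _ (by simp)
  have := LinearMap.BilinForm.finrank_orthogonal hnd K
  have heq : dualCode (K : Set (Fin N → ZMod 2)) = B.orthogonal K := by
    ext y
    rw [LinearMap.BilinForm.mem_orthogonal_iff]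
    show (∀ c ∈ (K : Set (Fin N → ZMod 2)), ∑ i, y i * c i = 0) ↔ _
    refine forall_congr' fun c => forall_congr' fun _ => ?_
    rw [hB, Matrix.toBilin'_apply']
    simp [dotProduct, mul_comm]
  rw [heq, this]
  have hle := Submodule.finrank_le K
  simp only [Module.finrank_fin_fun] at *
  omega

lemma dims [DecidableEq F] {m e h : ℕ} (hc : Fintype.card F = 2 ^ m)
    (hodd : Odd (m / Nat.gcd m e)) (he : 1 ≤ e) (hh : 2 * h + Nat.gcd m e = m) (h1 : 1 ≤ h)
    (ι : Fin (2 ^ m) ≃ F) :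
    Module.finrank (ZMod 2) (dualCode ((LinearMap.ker (evMap e ι) : Submodule _ _) :
      Set (Fin (2 ^ m) → ZMod 2))) = 2 * m + 1 ∧
    Module.finrank (ZMod 2) (LinearMap.ker (evMap e ι)) = 2 ^ m - 1 - 2 * m ∧
    dualCode ((LinearMap.ker (evMap e ι) : Submodule _ _) :
      Set (Fin (2 ^ m) → ZMod 2)) = LinearMap.range (Phi e ι) := by
  have hF := finrank_F hc
  have hP : Module.finrank (ZMod 2) (F × F × ZMod 2) = 2 * m + 1 := by
    rw [Module.finrank_prod, Module.finrank_prod, hF, Module.finrank_self]; ring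
  have hd := finrank_dual (LinearMap.ker (evMap e ι))
  have hr := LinearMap.finrank_range_add_finrank_ker (evMap e ι)
  have hr2 := Submodule.finrank_le (LinearMap.range (evMap e ι))
  have hPhi := LinearMap.finrank_range_of_inj (Phi_inj hc hodd he hh h1 ι)
  have hle : LinearMap.range (Phi e ι) ≤ dualCode ((LinearMap.ker (evMap e ι) : Submodule _ _) :
      Set (Fin (2 ^ m) → ZMod 2)) := by
    rintro _ ⟨p, rfl⟩; exact Phi_mem_dual e ι p
  have hle2 := Submodule.finrank_mono hle
  rw [Module.finrank_fin_fun] at hr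
  have hdim : Module.finrank (ZMod 2) (dualCode ((LinearMap.ker (evMap e ι) : Submodule _ _) :
      Set (Fin (2 ^ m) → ZMod 2))) = 2 * m + 1 := by omega
  refine ⟨hdim, by omega, ?_⟩
  exact (Submodule.eq_of_le_of_finrank_le hle (by omega)).symm

/-- counting codewords of the dual -/
lemma count_dual [DecidableEq F] {m e h : ℕ} (hc : Fintype.card F = 2 ^ m)
    (hodd : Odd (m / Nat.gcd m e)) (he : 1 ≤ e) (hh : 2 * h + Nat.gcd m e = m) (h1 : 1 ≤ h)
    (ι : Fin (2 ^ m) ≃ F) (k : ℕ) (t : ℤ) (ht : (2 : ℤ) ^ m - 2 * k = t) :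
    {y : Fin (2 ^ m) → ZMod 2 | y ∈ dualCode ((LinearMap.ker (evMap e ι) : Submodule _ _) :
      Set (Fin (2 ^ m) → ZMod 2)) ∧ hammingNorm y = k}.ncard =
    (Finset.univ.filter (fun p : F × F × ZMod 2 => sgn p.2.2 * W e p.1 p.2.1 = t)).card := by
  rw [(dims hc hodd he hh h1 ι).2.2]
  rw [← Set.ncard_coe_finset, ← Set.ncard_image_of_injective _ (Phi_inj hc hodd he hh h1 ι)]
  congr 1
  have key : ∀ p, hammingNorm (Phi e ι p) = k ↔ sgn p.2.2 * W e p.1 p.2.1 = t := by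
    intro p
    have hw := Phi_weight e ι p
    push_cast at hw
    rw [← hw, ← ht]
    constructor
    · intro h; rw [h]
    · intro h; have : (hammingNorm (Phi e ι p) : ℤ) = k := by linarith
      exact_mod_cast this
  ext y
  simp only [Set.mem_image, Finset.coe_filter, Finset.mem_univ, true_and, Set.mem_ofPred_eq,
    LinearMap.mem_range]
  constructor
  · rintro ⟨⟨p, rfl⟩, hk⟩; exact ⟨p, (key p).1 hk, rfl⟩
  · rintro ⟨p, hp, rfl⟩; exact ⟨⟨p, rfl⟩, (key p).2 hp⟩

end Coding

section Distance

variable {F : Type*} [Field F] [Fintype F] [Algebra (ZMod 2) F] [DecidableEq F]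

/-- Supports of codewords. -/
def IsSupp (e : ℕ) (S : Finset F) : Prop :=
  ∑ x ∈ S, x = 0 ∧ ∑ x ∈ S, x ^ (1 + 2 ^ e) = 0 ∧ ∑ _x ∈ S, (1 : ZMod 2) = 0

lemma zmod2_smul {M : Type*} [AddCommGroup M] [Module (ZMod 2) M] (c : ZMod 2) (x : M) :
    c • x = if c ≠ 0 then x else 0 := by
  have : c = 0 ∨ c = 1 := by revert c; decide
  rcases this with rfl | rfl <;> simp

lemma sum_supp {M : Type*} [AddCommGroup M] [Module (ZMod 2) M] {N : ℕ} (ι : Fin N ≃ F)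
    (c : Fin N → ZMod 2) (f : F → M) :
    ∑ i, c i • f (ι i) =
      ∑ x ∈ (Finset.univ.filter (fun i => c i ≠ 0)).map ι.toEmbedding, f x := by
  rw [Finset.sum_map, Finset.sum_filter]
  exact Finset.sum_congr rfl fun i _ => zmod2_smul _ _

lemma mem_ker_iff_supp (e : ℕ) {N : ℕ} (ι : Fin N ≃ F) (c : Fin N → ZMod 2) :
    c ∈ LinearMap.ker (evMap e ι) ↔
      IsSupp e ((Finset.univ.filter (fun i => c i ≠ 0)).map ι.toEmbedding) := by
  unfold IsSupp
  rw [← sum_supp ι c (fun x => x), ← sum_supp ι c (fun x => x ^ (1 + 2 ^ e)),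
    ← sum_supp ι c (fun _ => (1 : ZMod 2))]
  simp [evMap, LinearMap.mem_ker]

lemma weights_eq (e : ℕ) {N : ℕ} (ι : Fin N ≃ F) :
    {i | ∃ c ∈ LinearMap.ker (evMap e ι), c ≠ 0 ∧ hammingNorm c = i} =
    {i | ∃ S : Finset F, IsSupp e S ∧ S.Nonempty ∧ S.card = i} := by
  ext k
  simp only [Set.mem_ofPred_eq]
  constructor
  · rintro ⟨c, hc, hc0, hk⟩
    refine ⟨_, (mem_ker_iff_supp e ι c).1 hc, ?_, ?_⟩
    · rw [← Finset.card_pos, Finset.card_map]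
      exact hammingNorm_pos_iff.2 hc0
    · rw [Finset.card_map]; exact hk
  · rintro ⟨S, hS, hne, hk⟩
    have hmap : (Finset.univ.filter
        (fun i => (fun i => if ι i ∈ S then (1 : ZMod 2) else 0) i ≠ 0)).map ι.toEmbedding = S := by
      ext x
      simp only [Finset.mem_map, Finset.mem_filter, Finset.mem_univ, true_and]
      constructor
      · rintro ⟨i, hi, rfl⟩
        by_contra h
        exact hi (if_neg h)
      · intro hx
        refine ⟨ι.symm x, ?_, by simp⟩
        simp [hx]
    have hn : hammingNorm (fun i => if ι i ∈ S then (1 : ZMod 2) else 0) = S.card := by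
      conv_rhs => rw [← hmap]
      rw [Finset.card_map]; rfl
    refine ⟨fun i => if ι i ∈ S then 1 else 0, ?_, ?_, ?_⟩
    · rw [mem_ker_iff_supp, hmap]; exact hS
    · rw [← hammingNorm_pos_iff, hn]; exact Finset.card_pos.2 hne
    · rw [hn, hk]

lemma IsSupp.even {e : ℕ} {S : Finset F} (h : IsSupp e S) : Even S.card := by
  have := h.2.2
  simp only [Finset.sum_const, nsmul_eq_mul, mul_one] at this
  exact (ZMod.natCast_eq_zero_iff_even).1 this

lemma IsSupp.ne_two {e : ℕ} {S : Finset F} (h : IsSupp e S) : S.card ≠ 2 := by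
  haveI := charTwoF F
  intro h2
  obtain ⟨x, y, hxy, rfl⟩ := Finset.card_eq_two.1 h2
  have := h.1
  rw [Finset.sum_pair hxy] at this
  exact hxy (CharTwo.add_eq_zero.1 this)

lemma IsSupp.ne_four {m e : ℕ} (hc : Fintype.card F = 2 ^ m) (hg : Nat.gcd e m = 1)
    {S : Finset F} (h : IsSupp e S) : S.card ≠ 4 := by
  haveI := charTwoF F
  intro h4
  obtain ⟨x, T, hxT, rfl, hT⟩ := Finset.card_eq_succ.1 h4
  obtain ⟨y, z, w, hyz, hyw, hzw, rfl⟩ := Finset.card_eq_three.1 hT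
  simp only [Finset.mem_insert, Finset.mem_singleton, not_or] at hxT
  obtain ⟨hxy, hxz, hxw⟩ := hxT
  obtain ⟨e1, e2, -⟩ := h
  rw [Finset.sum_insert (by simp [hxy, hxz, hxw]), Finset.sum_insert (by simp [hyz, hyw]),
    Finset.sum_pair hzw] at e1 e2
  have h2 : (2 : F) = 0 := CharTwo.two_eq_zero
  have hw : w = x + y + z := by linear_combination (-1 : F) * e1 + w * h2
  -- set y = x + u, z = x + v, w = x + u + v
  obtain ⟨u, rfl⟩ : ∃ u, y = x + u := ⟨y - x, by ring⟩
  obtain ⟨v, rfl⟩ : ∃ v, z = x + v := ⟨z - x, by ring⟩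
  have hw' : w = x + (u + v) := by rw [hw]; linear_combination x * h2
  have hu : u ≠ 0 := by rintro rfl; exact hxy (by ring)
  have hv : v ≠ 0 := by rintro rfl; exact hxz (by ring)
  have huv : u ≠ v := by rintro rfl; exact hyz rfl
  rw [hw', Q_add, Q_add, Q_add, Q_add u v, add_pow_two_pow u v] at e2
  have key : u * v ^ 2 ^ e + u ^ 2 ^ e * v = 0 := by
    linear_combination e2 - (2 * x ^ (1 + 2 ^ e) + u ^ (1 + 2 ^ e) + v ^ (1 + 2 ^ e) +
      x * u ^ 2 ^ e + x ^ 2 ^ e * u + x * v ^ 2 ^ e + x ^ 2 ^ e * v) * h2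
  have hfix : (u / v) ^ 2 ^ e = u / v := by
    rw [div_pow, div_eq_div_iff (pow_ne_zero _ hv) hv]
    exact (CharTwo.add_eq_zero.1 key).symm
  have := pow_gcd_fix (u / v) e m hfix (pow_card_fix hc _)
  rw [hg] at this
  have h3 : (u / v) * (u / v - 1) = 0 := by
    linear_combination this
  rcases mul_eq_zero.1 h3 with h5 | h5
  · exact div_ne_zero hu hv h5
  · exact huv ((div_eq_one_iff_eq hv).1 (sub_eq_zero.1 h5))

lemma least_four {m e : ℕ} (hc : Fintype.card F = 2 ^ m) (hg : 1 < Nat.gcd e m) :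
    IsLeast {i | ∃ S : Finset F, IsSupp e S ∧ S.Nonempty ∧ S.card = i} 4 := by
  haveI := charTwoF F
  have h2 : (2 : F) = 0 := CharTwo.two_eq_zero
  constructor
  · have hcard := card_fix hc (Nat.gcd_dvd_right e m) (by omega)
    have hlt : ({0, 1} : Finset F).card <
        (Finset.univ.filter (fun x : F => x ^ 2 ^ (Nat.gcd e m) = x)).card := by
      rw [hcard]
      calc ({0, 1} : Finset F).card ≤ 2 := Finset.card_le_two
        _ < 2 ^ 2 := by norm_num
        _ ≤ 2 ^ (Nat.gcd e m) := Nat.pow_le_pow_right (by norm_num) hg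
    obtain ⟨u, hu, hu2⟩ := Finset.exists_mem_notMem_of_card_lt_card hlt
    simp only [Finset.mem_filter, Finset.mem_univ, true_and, Finset.mem_insert,
      Finset.mem_singleton, not_or] at hu hu2
    rw [Nat.gcd_comm] at hu
    have hue := fix_e u hu
    obtain ⟨hu0, hu1⟩ := hu2
    have hu3 : 1 + u ≠ 0 := fun h => hu1 (CharTwo.add_eq_zero.1 h).symm
    have hu4 : (1 : F) ≠ 1 + u := fun h => hu0 (by linear_combination (-1 : F) * h)
    have hu5 : u ≠ 1 + u := fun h => one_ne_zero (α := F) (by linear_combination (-1 : F) * h)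
    have n1 : (0 : F) ∉ ({1, u, 1 + u} : Finset F) := by
      simp [Ne.symm hu0, Ne.symm hu3]
    have n2 : (1 : F) ∉ ({u, 1 + u} : Finset F) := by
      simp only [Finset.mem_insert, Finset.mem_singleton, not_or]
      exact ⟨Ne.symm hu1, hu4⟩
    have hS : ({0, 1, u, 1 + u} : Finset F).card = 4 := by
      rw [Finset.card_insert_of_notMem n1, Finset.card_insert_of_notMem n2, Finset.card_pair hu5]
    refine ⟨{0, 1, u, 1 + u}, ⟨?_, ?_, ?_⟩, by simp, hS⟩
    · rw [Finset.sum_insert n1, Finset.sum_insert n2, Finset.sum_pair hu5]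
      linear_combination (1 + u) * h2
    · rw [Finset.sum_insert n1, Finset.sum_insert n2, Finset.sum_pair hu5, Q_add, hue,
        zero_pow (by positivity)]
      simp only [one_pow]
      linear_combination (1 + u ^ (1 + 2 ^ e) + u) * h2
    · rw [Finset.sum_const, hS]; decide
  · rintro i ⟨S, hS, hne, rfl⟩
    have h1 := hS.even
    have h3 := hS.ne_two
    have h4 := Finset.card_pos.2 hne
    obtain ⟨k, hk⟩ := h1
    omega

lemma sum_symmDiff_two {M : Type*} [AddCommGroup M] [Module (ZMod 2) M] (S T : Finset F)
    (f : F → M) (h : ∑ x ∈ S, f x = ∑ x ∈ T, f x) : ∑ x ∈ symmDiff S T, f x = 0 := by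
  have h1 := Finset.sum_inter_add_sum_sdiff S T f
  have h2 := Finset.sum_inter_add_sum_sdiff T S f
  rw [Finset.inter_comm] at h2
  have h3 : ∑ x ∈ S \ T, f x = ∑ x ∈ T \ S, f x := by
    rw [← h1, ← h2] at h; exact add_left_cancel h
  rw [symmDiff_def, Finset.sup_eq_union, Finset.sum_union disjoint_sdiff_sdiff, h3]
  rw [← two_smul (ZMod 2)]
  rw [show (2 : ZMod 2) = 0 from rfl, zero_smul]

lemma least_six {m e : ℕ} (hc : Fintype.card F = 2 ^ m) (hm : 5 ≤ m) (hg : Nat.gcd e m = 1) :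
    IsLeast {i | ∃ S : Finset F, IsSupp e S ∧ S.Nonempty ∧ S.card = i} 6 := by
  constructor
  · have hcard : (Finset.univ : Finset (F × F)).card <
        (Finset.powersetCard 3 (Finset.univ : Finset F)).card := by
      rw [Finset.card_powersetCard, Finset.card_univ, Finset.card_univ, Fintype.card_prod, hc]
      have h32 : 2 ^ 5 ≤ 2 ^ m := Nat.pow_le_pow_right (by norm_num) hm
      obtain ⟨k, hk⟩ := Nat.exists_eq_add_of_le h32
      rw [hk]
      have := Nat.descFactorial_eq_factorial_mul_choose (2 ^ 5 + k) 3
      simp only [Nat.descFactorial, Nat.factorial] at this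
      norm_num at this ⊢
      rw [show 32 + k - 2 = 30 + k by omega] at this
      nlinarith [this, sq_nonneg k, Nat.zero_le (k ^ 3)]
    obtain ⟨S, hS, T, hT, hne, heq⟩ := Finset.exists_ne_map_eq_of_card_lt_of_maps_to hcard
      (f := fun S : Finset F => (∑ x ∈ S, x, ∑ x ∈ S, x ^ (1 + 2 ^ e))) (fun _ _ => by simp)
    rw [Finset.mem_powersetCard] at hS hT
    simp only [Prod.mk.injEq] at heq
    have hsupp : IsSupp e (symmDiff S T) :=
      ⟨sum_symmDiff_two S T _ heq.1, sum_symmDiff_two S T _ heq.2,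
        sum_symmDiff_two S T _ (by simp [hS.2, hT.2])⟩
    have hnem : (symmDiff S T).Nonempty := by
      rw [Finset.nonempty_iff_ne_empty]
      intro h0
      exact hne (symmDiff_eq_bot.1 h0)
    refine ⟨_, hsupp, hnem, ?_⟩
    have h1 := hsupp.even
    have h3 := hsupp.ne_two
    have h5 := hsupp.ne_four hc hg
    have h4 := Finset.card_pos.2 hnem
    have hle : (symmDiff S T).card ≤ 6 := by
      calc (symmDiff S T).card ≤ (S ∪ T).card := Finset.card_le_card symmDiff_le_sup
        _ ≤ S.card + T.card := Finset.card_union_le _ _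
        _ = 6 := by rw [hS.2, hT.2]
    obtain ⟨k, hk⟩ := h1
    omega
  · rintro i ⟨S, hS, hne, rfl⟩
    have h1 := hS.even
    have h3 := hS.ne_two
    have h5 := hS.ne_four hc hg
    have h4 := Finset.card_pos.2 hne
    obtain ⟨k, hk⟩ := h1
    omega

end Distance

section Galois

/-- coordinates -/
lemma exists_coords {m : ℕ} (hm : 4 ≤ m) (α : GaloisField 2 m) (hα : orderOf α = 2 ^ m - 1) :
    ∃ ι : Fin (2 ^ m) ≃ GaloisField 2 m,
      ∀ i, ι i = if (i : ℕ) < 2 ^ m - 1 then α ^ (i : ℕ) else 0 := by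
  have h16 : 2 ^ 4 ≤ 2 ^ m := Nat.pow_le_pow_right (by norm_num) hm
  have hα0 : α ≠ 0 := by
    rintro rfl
    rw [orderOf_zero] at hα; omega
  let f : Fin (2 ^ m) → GaloisField 2 m :=
    fun i => if (i : ℕ) < 2 ^ m - 1 then α ^ (i : ℕ) else 0
  have hinj : Function.Injective f := by
    intro i j hij
    simp only [f] at hij
    have hi := i.2
    have hj := j.2
    apply Fin.ext
    split_ifs at hij with h1 h2 h2
    · exact pow_injOn_Iio_orderOf (by simpa [hα] using h1) (by simpa [hα] using h2) hij
    · exact absurd hij (pow_ne_zero _ hα0)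
    · exact absurd hij.symm (pow_ne_zero _ hα0)
    · omega
  haveI : Fintype (GaloisField 2 m) := Fintype.ofFinite _
  have hbij : Function.Bijective f := by
    rw [Fintype.bijective_iff_injective_and_card]
    refine ⟨hinj, ?_⟩
    rw [Fintype.card_fin, ← Nat.card_eq_fintype_card, GaloisField.card 2 m (by omega)]
  exact ⟨Equiv.ofBijective f hbij, fun i => rfl⟩

lemma minpoly_ne {m e : ℕ} (hm : 4 ≤ m) (he1 : 1 ≤ e) (heM : 2 * e ≤ m)
    (α : GaloisField 2 m) (hα : orderOf α = 2 ^ m - 1) :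
    minpoly (ZMod 2) α ≠ minpoly (ZMod 2) (α ^ (1 + 2 ^ e)) := by
  haveI := charTwoF (GaloisField 2 m)
  intro h
  haveI : Fintype (GaloisField 2 m) := Fintype.ofFinite _
  obtain ⟨σ, hσ⟩ := (isConjRoot_iff_exists_algEquiv (K := ZMod 2)).1
    (show IsConjRoot (ZMod 2) (α ^ (1 + 2 ^ e)) α from h.symm)
  obtain ⟨ι, hι⟩ := exists_coords hm α hα
  have hall : ∀ x, σ x = x ^ (1 + 2 ^ e) := by
    intro x
    obtain ⟨i, rfl⟩ := ι.surjective x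
    rw [hι]
    split_ifs
    · rw [map_pow, hσ, ← pow_mul, ← pow_mul, mul_comm]
    · simp
  have h1 := map_add σ 1 α
  rw [hall, hall α, map_one, Q_add] at h1
  simp only [one_pow, one_mul] at h1
  have h2 : α ^ 2 ^ e + α = 0 := by linear_combination h1
  have h3 : α ^ 2 ^ e = α := CharTwo.add_eq_zero.1 h2
  have h16 : 2 ^ 4 ≤ 2 ^ m := Nat.pow_le_pow_right (by norm_num) hm
  have hlt : 2 ^ e < 2 ^ m := Nat.pow_lt_pow_right (by norm_num) (by omega)
  have h2e : 2 ^ 1 ≤ 2 ^ e := Nat.pow_le_pow_right (by norm_num) he1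
  have hα0 : α ≠ 0 := by
    rintro rfl
    rw [orderOf_zero] at hα; omega
  have h4 : α ^ (2 ^ e - 1) = 1 := by
    apply mul_right_cancel₀ hα0
    rw [← pow_succ, one_mul, Nat.sub_add_cancel (by omega), h3]
  have := orderOf_le_of_pow_eq_one (by omega) h4
  omega

lemma CE_iff {m e : ℕ} (hm : 4 ≤ m) (he1 : 1 ≤ e) (heM : 2 * e ≤ m)
    (α : GaloisField 2 m) (hα : orderOf α = 2 ^ m - 1) (c : Fin (2 ^ m - 1) → ZMod 2) :
    c ∈ CE m e α ↔ ∑ i, c i • α ^ (i : ℕ) = 0 ∧ ∑ i, c i • (α ^ (i : ℕ)) ^ (1 + 2 ^ e) = 0 := by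
  have hev : ∀ β : GaloisField 2 m, aeval β (codePoly c) = ∑ i, c i • β ^ (i : ℕ) := by
    intro β
    simp [codePoly, Algebra.smul_def]
  have hIntg : ∀ β : GaloisField 2 m, IsIntegral (ZMod 2) β := fun β =>
    Algebra.IsIntegral.isIntegral β
  have hcop : IsCoprime (minpoly (ZMod 2) α) (minpoly (ZMod 2) (α ^ (1 + 2 ^ e))) := by
    rw [(minpoly.irreducible (hIntg α)).coprime_iff_not_dvd]
    intro hd
    exact minpoly_ne hm he1 heM α hα (eq_of_monic_of_associated (minpoly.monic (hIntg _))
      (minpoly.monic (hIntg _))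
      ((minpoly.irreducible (hIntg α)).associated_of_dvd (minpoly.irreducible (hIntg _)) hd))
  show gE m e α ∣ codePoly c ↔ _
  unfold gE
  have h2 : ∑ i, c i • (α ^ (i : ℕ)) ^ (1 + 2 ^ e) = aeval (α ^ (1 + 2 ^ e)) (codePoly c) := by
    rw [hev]
    refine Finset.sum_congr rfl fun i _ => ?_
    rw [← pow_mul, ← pow_mul, mul_comm]
  rw [h2, ← hev α, ← minpoly.dvd_iff, ← minpoly.dvd_iff]
  constructor
  · intro h
    exact ⟨dvd_of_mul_right_dvd h, dvd_of_mul_left_dvd h⟩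
  · rintro ⟨h1, h2⟩
    exact hcop.mul_dvd h1 h2

lemma sum_castLE {M : Type*} [AddCommMonoid M] {n N : ℕ} (hN : N = n + 1) (hle : n ≤ N)
    (f : Fin N → M) :
    ∑ i, f i = ∑ i : Fin n, f (Fin.castLE hle i) + f ⟨n, by omega⟩ := by
  subst hN
  rw [Fin.sum_univ_castSucc]; rfl

lemma CEbar_eq {m e : ℕ} (hm : 4 ≤ m) (he1 : 1 ≤ e) (heM : 2 * e ≤ m)
    (α : GaloisField 2 m) (hα : orderOf α = 2 ^ m - 1) (ι : Fin (2 ^ m) ≃ GaloisField 2 m)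
    (hι : ∀ i, ι i = if (i : ℕ) < 2 ^ m - 1 then α ^ (i : ℕ) else 0) :
    CEbar m e α = (LinearMap.ker (evMap e ι) : Submodule _ _) := by
  have h16 : 2 ^ 4 ≤ 2 ^ m := Nat.pow_le_pow_right (by norm_num) hm
  ext c
  show (_ ∈ CE m e α ∧ _) ↔ evMap e ι c = 0
  rw [CE_iff hm he1 heM α hα]
  simp only [evMap, LinearMap.coe_mk, AddHom.coe_mk, Prod.mk_eq_zero]
  rw [sum_castLE (n := 2 ^ m - 1) (by omega) (Nat.sub_le _ _) (fun i => c i • ι i),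
    sum_castLE (n := 2 ^ m - 1) (by omega) (Nat.sub_le _ _) (fun i => c i • ι i ^ (1 + 2 ^ e))]
  simp [hι, and_assoc]

end Galois
/-- Let `m ≥ 4`, `1 ≤ e ≤ ⌊m/2⌋` with `m/gcd(m,e)` odd, and
`h = (m − gcd(m,e))/2`. Then `C̄_E^⊥` has dimension `2m + 1`, minimum nonzero weight
`2^{m−1} − 2^{m−1−h}`, and the stated weight distribution, with no codewords of other
weights; moreover `C̄_E` has dimension `2^m − 1 − 2m` and minimum nonzero weight `4`
if `gcd(e,m) > 1` and `6` if `gcd(e,m) = 1`. -/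
theorem dual_code_parameters_case_a
    (m e h : ℕ) (hm : 4 ≤ m) (he1 : 1 ≤ e) (heM : 2 * e ≤ m)
    (hodd : Odd (m / Nat.gcd m e)) (hh : 2 * h = m - Nat.gcd m e)
    (α : GaloisField 2 m) (hα : orderOf α = 2 ^ m - 1) :
    Module.finrank (ZMod 2) ↥(dualCode (CEbar m e α)) = 2 * m + 1 ∧
    IsLeast {i | ∃ y ∈ dualCode (CEbar m e α), y ≠ 0 ∧ hammingNorm y = i}
      (2 ^ (m - 1) - 2 ^ (m - 1 - h)) ∧
    {y : Fin (2 ^ m) → ZMod 2 |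
      y ∈ dualCode (CEbar m e α) ∧ hammingNorm y = 0}.ncard = 1 ∧
    {y : Fin (2 ^ m) → ZMod 2 | y ∈ dualCode (CEbar m e α) ∧
      hammingNorm y = 2 ^ (m - 1) - 2 ^ (m - 1 - h)}.ncard =
        (2 ^ m - 1) * 2 ^ (2 * h) ∧
    {y : Fin (2 ^ m) → ZMod 2 | y ∈ dualCode (CEbar m e α) ∧
      hammingNorm y = 2 ^ (m - 1)}.ncard =
        (2 ^ m - 1) * (2 ^ (m + 1) - 2 ^ (2 * h + 1) + 2) ∧
    {y : Fin (2 ^ m) → ZMod 2 | y ∈ dualCode (CEbar m e α) ∧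
      hammingNorm y = 2 ^ (m - 1) + 2 ^ (m - 1 - h)}.ncard =
        (2 ^ m - 1) * 2 ^ (2 * h) ∧
    {y : Fin (2 ^ m) → ZMod 2 | y ∈ dualCode (CEbar m e α) ∧
      hammingNorm y = 2 ^ m}.ncard = 1 ∧
    (∀ y ∈ dualCode (CEbar m e α), hammingNorm y ∈
      ({0, 2 ^ (m - 1) - 2 ^ (m - 1 - h), 2 ^ (m - 1),
        2 ^ (m - 1) + 2 ^ (m - 1 - h), 2 ^ m} : Set ℕ)) ∧
    Module.finrank (ZMod 2) ↥(CEbarSub m e α) = 2 ^ m - 1 - 2 * m ∧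
    (1 < Nat.gcd e m →
      IsLeast {i | ∃ c ∈ CEbar m e α, c ≠ 0 ∧ hammingNorm c = i} 4) ∧
    (Nat.gcd e m = 1 →
      IsLeast {i | ∃ c ∈ CEbar m e α, c ≠ 0 ∧ hammingNorm c = i} 6) := by
  classical
  haveI : Fintype (GaloisField 2 m) := Fintype.ofFinite _
  have hc : Fintype.card (GaloisField 2 m) = 2 ^ m := by
    rw [← Nat.card_eq_fintype_card, GaloisField.card 2 m (by omega)]
  obtain ⟨ι, hι⟩ := exists_coords hm α hα
  have hC := CEbar_eq hm he1 heM α hα ι hι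
  have hgd : Nat.gcd m e ≤ e := Nat.gcd_le_right _ he1
  have hh' : 2 * h + Nat.gcd m e = m := by omega
  have h1 : 1 ≤ h := by omega
  have hD := dims hc hodd he1 hh' h1 ι
  have hcount := count_dual hc hodd he1 hh' h1 ι
  have hS : Module.finrank (ZMod 2) (CEbarSub m e α) = 2 ^ m - 1 - 2 * m := by
    have : CEbarSub m e α = LinearMap.ker (evMap e ι) := SetLike.coe_injective hC
    rw [this]; exact hD.2.1
  have hw : {i | ∃ c ∈ CEbar m e α, c ≠ 0 ∧ hammingNorm c = i} =
      {i | ∃ S : Finset (GaloisField 2 m), IsSupp e S ∧ S.Nonempty ∧ S.card = i} := by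
    rw [hC]; exact weights_eq e ι
  -- powers of two
  have p1 : 2 ^ m = 2 * 2 ^ (m - 1) := by rw [← pow_succ']; congr 1; omega
  have p2 : 2 ^ (m - h) = 2 * 2 ^ (m - 1 - h) := by rw [← pow_succ']; congr 1; omega
  have p3 : 2 ^ (m - 1 - h) < 2 ^ (m - 1) := Nat.pow_lt_pow_right (by norm_num) (by omega)
  have z1 : (2 : ℤ) ^ m = 2 * 2 ^ (m - 1) := by exact_mod_cast p1
  have z2 : (2 : ℤ) ^ (m - h) = 2 * 2 ^ (m - 1 - h) := by exact_mod_cast p2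
  have zk : ((2 ^ (m - 1) - 2 ^ (m - 1 - h) : ℕ) : ℤ) = 2 ^ (m - 1) - 2 ^ (m - 1 - h) := by
    rw [Nat.cast_sub p3.le]; push_cast; rfl
  have cMinus := (hcount (2 ^ (m - 1) - 2 ^ (m - 1 - h)) (1 * 2 ^ (m - h))
    (by rw [zk, z1, z2]; ring)).trans (SW_count hc hodd he1 hh' h1 1 (Or.inl rfl))
  have cPlus := (hcount (2 ^ (m - 1) + 2 ^ (m - 1 - h)) (-1 * 2 ^ (m - h))
    (by push_cast; rw [z1, z2]; ring)).trans (SW_count hc hodd he1 hh' h1 (-1) (Or.inr rfl))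
  have cZero := (hcount (2 ^ (m - 1)) 0
    (by push_cast; rw [z1]; ring)).trans (SW_count_zero hc hodd he1 hh' h1)
  have c0 := hcount 0 (2 ^ m) (by push_cast; ring)
  have cFull := hcount (2 ^ m) (- 2 ^ m) (by push_cast; ring)
  have f0 : (Finset.univ.filter (fun p : GaloisField 2 m × GaloisField 2 m × ZMod 2 =>
      sgn p.2.2 * W e p.1 p.2.1 = 2 ^ m)).card = 1 := by
    rw [Finset.card_eq_one]
    exact ⟨(0, 0, 0), by ext p; simp [SW_pow_iff hc hodd he1 hh' h1 p]⟩
  have fFull : (Finset.univ.filter (fun p : GaloisField 2 m × GaloisField 2 m × ZMod 2 =>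
      sgn p.2.2 * W e p.1 p.2.1 = - 2 ^ m)).card = 1 := by
    rw [Finset.card_eq_one]
    exact ⟨(0, 0, 1), by ext p; simp [SW_neg_pow_iff hc hodd he1 hh' h1 p]⟩
  have hall : ∀ y ∈ dualCode (CEbar m e α), hammingNorm y ∈
      ({0, 2 ^ (m - 1) - 2 ^ (m - 1 - h), 2 ^ (m - 1),
        2 ^ (m - 1) + 2 ^ (m - 1 - h), 2 ^ m} : Set ℕ) := by
    rw [hC, hD.2.2]
    rintro _ ⟨p, rfl⟩
    have hwt := Phi_weight e ι p
    push_cast at hwt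
    simp only [Set.mem_insert_iff, Set.mem_singleton_iff]
    zify
    rw [zk]
    rcases SW_values hc hodd he1 hh' h1 p with h0 | h0 | h0 | h0 | h0
    · right; right; left; rw [h0] at hwt; linarith
    · right; left; rw [h0] at hwt; linarith
    · right; right; right; left; rw [h0] at hwt; linarith
    · left; rw [(SW_pow_iff hc hodd he1 hh' h1 p).2 h0] at hwt; linarith
    · right; right; right; right
      rw [(SW_neg_pow_iff hc hodd he1 hh' h1 p).2 h0] at hwt; linarith
  rw [← hC] at cMinus cPlus cZero c0 cFull
  refine ⟨by rw [hC]; exact hD.1, ?_, c0.trans f0, cMinus, cZero, cPlus, cFull.trans fFull, hall,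
    hS, ?_, ?_⟩
  · constructor
    · have hpos : 0 < {y : Fin (2 ^ m) → ZMod 2 | y ∈ dualCode (CEbar m e α) ∧
          hammingNorm y = 2 ^ (m - 1) - 2 ^ (m - 1 - h)}.ncard := by
        rw [cMinus]
        have : 2 ^ 1 ≤ 2 ^ m := Nat.pow_le_pow_right (by norm_num) (by omega)
        exact Nat.mul_pos (by omega) (by positivity)
      obtain ⟨y, hy, hy2⟩ := Set.nonempty_of_ncard_ne_zero hpos.ne'
      refine ⟨y, hy, ?_, hy2⟩
      rw [← hammingNorm_pos_iff, hy2]; omega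
    · rintro i ⟨y, hy, hy0, rfl⟩
      have hp := hammingNorm_pos_iff.2 hy0
      have := hall y hy
      simp only [Set.mem_insert_iff, Set.mem_singleton_iff] at this
      omega
  · intro hg
    rw [hw]; exact least_four hc hg
  · intro hg
    rw [hw]
    refine least_six hc ?_ hg
    by_contra hlt
    have h4 : m = 4 := by omega
    rw [Nat.gcd_comm, hg, h4] at hodd
    revert hodd; decide
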